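/- arXiv:2301.06457 — 6 statements merged into one kernel-verified Lean document; each statement's English description precedes it below -/
import Mathlib

section
/- Let H be a finite simple bipartite graph, let v₀ be a vertex of H, and for each integer d ≥ 0 let V_d be the set of vertices of H at graph distance exactly d from v₀. If H has a perfect matching, then for every perfect matching M of H and every d ≥ 0, the number of edges of M with one endpoint in V_d and the other endpoint in V_{d+1} is exactly S_d := Σ_{i=0}^{d} (−1)^i · |V_{d−i}|. -/
theorem adj_layer {V : Type*} (H : SimpleGraph V) (hbip : H.Colorable 2)
    (v₀ u v : V) (h : H.Adj u v) (hu : H.Reachable v₀ u) :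
    H.Reachable v₀ v ∧ (H.dist v₀ v = H.dist v₀ u + 1 ∨ H.dist v₀ u = H.dist v₀ v + 1) := by
  have hv : H.Reachable v₀ v := hu.trans h.reachable
  refine ⟨hv, ?_⟩
  have c : H.Coloring Bool := hbip.toColoring (by simp)
  obtain ⟨p, hp⟩ := hu.exists_walk_length_eq_dist
  obtain ⟨q, hq⟩ := hv.exists_walk_length_eq_dist
  have h1 := c.even_length_iff_congr p
  have h2 := c.even_length_iff_congr q
  have h3 := c.valid h
  have h4 := H.dist_le (p.concat h)
  have h5 := H.dist_le (q.concat h.symm)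
  rw [SimpleGraph.Walk.length_concat] at h4 h5
  rw [hp] at h1 h4
  rw [hq] at h2 h5
  have h6 : H.dist v₀ u ≠ H.dist v₀ v := by
    intro he
    rw [he] at h1
    rw [h1] at h2
    apply h3
    revert h2
    cases c u <;> cases c v <;> cases c v₀ <;> simp
  omega

/-- In a finite simple bipartite graph `H` with a distinguished
vertex `v₀`, for any perfect matching `M` of `H` and any `d ≥ 0`, the number of
matching edges between `V_d` (vertices at distance exactly `d` from `v₀`) and
`V_{d+1}` equals `S_d = Σ_{i=0}^{d} (-1)^i |V_{d-i}|`. -/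
theorem stmt0 {V : Type*} [Fintype V] (H : SimpleGraph V) (hbip : H.Colorable 2)
    (v₀ : V) (M : H.Subgraph) (hM : M.IsPerfectMatching) (d : ℕ) :
    (Set.ncard {e : Sym2 V | e ∈ M.edgeSet ∧ ∃ u v : V, e = s(u, v) ∧
        (H.Reachable v₀ u ∧ H.dist v₀ u = d) ∧
        (H.Reachable v₀ v ∧ H.dist v₀ v = d + 1)} : ℤ) =
      ∑ i ∈ Finset.range (d + 1),
        (-1 : ℤ) ^ i *
          (Set.ncard {v : V | H.Reachable v₀ v ∧ H.dist v₀ v = d - i} : ℤ) := by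
  have hex : ∀ v, ∃ w, M.Adj v w ∧ ∀ x, M.Adj v x → x = w := fun v => hM.1 (hM.2 v)
  choose f hf hu using hex
  have hff : ∀ v, f (f v) = v := fun v => (hu (f v) v (hf v).symm).symm
  have hinj : Function.Injective f := fun a b h => by rw [← hff a, h, hff]
  have hlay := fun v => adj_layer H hbip v₀ v (f v) (hf v).adj_sub
  let A : ℕ → Set V := fun d => {u | (H.Reachable v₀ u ∧ H.dist v₀ u = d) ∧
    (H.Reachable v₀ (f u) ∧ H.dist v₀ (f u) = d + 1)}
  have hE : ∀ d, {e : Sym2 V | e ∈ M.edgeSet ∧ ∃ u v : V, e = s(u, v) ∧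
        (H.Reachable v₀ u ∧ H.dist v₀ u = d) ∧
        (H.Reachable v₀ v ∧ H.dist v₀ v = d + 1)} = (fun u => s(u, f u)) '' A d := by
    intro d
    ext e
    constructor
    · rintro ⟨he, u, v, rfl, h1, h2⟩
      have : v = f u := hu u v he
      subst this
      exact ⟨u, ⟨h1, h2⟩, rfl⟩
    · rintro ⟨u, ⟨h1, h2⟩, rfl⟩
      exact ⟨hf u, u, f u, rfl, h1, h2⟩
  have hEc : ∀ d, Set.ncard ((fun u => s(u, f u)) '' A d) = (A d).ncard := by
    intro d
    apply Set.ncard_image_of_injOn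
    rintro a ⟨ha, ha'⟩ b ⟨hb, hb'⟩ hab
    simp only [Sym2.eq_iff] at hab
    rcases hab with h | h
    · exact h.1
    · rw [h.1] at ha
      omega
  have hBc : ∀ d, (f '' A d).ncard = (A d).ncard := fun d =>
    Set.ncard_image_of_injective _ hinj
  have h0 : {v : V | H.Reachable v₀ v ∧ H.dist v₀ v = 0} = A 0 := by
    ext v
    constructor
    · rintro ⟨h1, h2⟩
      have := hlay v h1
      exact ⟨⟨h1, h2⟩, this.1, by omega⟩
    · exact fun h => h.1
  have hS : ∀ d, {v : V | H.Reachable v₀ v ∧ H.dist v₀ v = d + 1} = f '' A d ∪ A (d + 1) := by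
    intro d
    ext v
    constructor
    · rintro ⟨h1, h2⟩
      obtain ⟨h3, h4⟩ := hlay v h1
      rcases h4 with h4 | h4
      · exact Or.inr ⟨⟨h1, h2⟩, h3, by omega⟩
      · refine Or.inl ⟨f v, ⟨⟨h3, by omega⟩, ?_⟩, hff v⟩
        rw [hff]
        exact ⟨h1, h2⟩
    · rintro (⟨u, h, rfl⟩ | h)
      · exact h.2
      · exact h.1
  have hSc : ∀ d, Set.ncard {v : V | H.Reachable v₀ v ∧ H.dist v₀ v = d + 1}
      = (A d).ncard + (A (d + 1)).ncard := by
    intro d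
    rw [hS, Set.ncard_union_eq _ (Set.toFinite _) (Set.toFinite _), hBc]
    rw [Set.disjoint_left]
    rintro _ ⟨u, h, rfl⟩ h'
    have h1 := h'.2.2
    rw [hff] at h1
    have h2 := h.1.2
    omega
  rw [hE, hEc]
  clear hE hEc hBc hS
  induction d with
  | zero => simp [← h0]
  | succ d ih =>
    rw [Finset.sum_range_succ']
    simp only [Nat.add_sub_add_right, pow_succ, pow_zero, Nat.sub_zero]
    rw [hSc]
    have : ∀ g : ℕ → ℤ, ∑ i ∈ Finset.range (d + 1), (-1 : ℤ) ^ i * -1 * g i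
        = - ∑ i ∈ Finset.range (d + 1), (-1 : ℤ) ^ i * g i := by
      intro g
      rw [← Finset.sum_neg_distrib]
      exact Finset.sum_congr rfl fun i _ => by ring
    rw [this, ← ih]
    push_cast
    ring
end

section
/- Let G be a graph with a partial (Δ+1)-coloring, let C be a set of vertices of G, and let M be a colorful matching in C. Then the clique palette satisfies |Ψ_C| ≥ (Δ+1) − |Č| + |M|, where Č is the set of colored vertices of C. -/
/-- For a graph `G` with a partial `(Δ+1)`-coloring `f`, a vertex
set `C`, and a colorful matching `M` in `C`, the clique palette `Ψ_C` (the colors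
used by no vertex of `C`) satisfies `|Ψ_C| ≥ (Δ+1) - |Č| + |M|`, where `Č` is the
set of colored vertices of `C`. -/
theorem stmt1 {V : Type*} [Fintype V] [DecidableEq V] (G : SimpleGraph V) (Δ : ℕ)
    (f : V → Option (Fin (Δ + 1)))
    (hf : ∀ u v, G.Adj u v → ∀ c, f u = some c → f v ≠ some c)
    (C : Finset V) (M : Finset (V × V))
    (hM : ∀ p ∈ M, p.1 ≠ p.2 ∧ ¬ G.Adj p.1 p.2 ∧ p.1 ∈ C ∧ p.2 ∈ C ∧
      ∃ c, f p.1 = some c ∧ f p.2 = some c)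
    (hdisj : ∀ p ∈ M, ∀ q ∈ M, p ≠ q →
      p.1 ≠ q.1 ∧ p.1 ≠ q.2 ∧ p.2 ≠ q.1 ∧ p.2 ≠ q.2)
    (hcol : ∀ p ∈ M, ∀ q ∈ M, p ≠ q → f p.1 ≠ f q.1) :
    ((Δ : ℤ) + 1) - ((C.filter (fun v => f v ≠ none)).card : ℤ) + (M.card : ℤ) ≤
      (Set.ncard {c : Fin (Δ + 1) | ∀ v ∈ C, f v ≠ some c} : ℤ) := by
  classical
  set A := C.filter (fun v => f v ≠ none) with hA
  set S := M.image Prod.snd with hS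
  set U : Finset (Fin (Δ + 1)) := Finset.univ.filter (fun c => ∃ v ∈ C, f v = some c) with hU
  have hScard : S.card = M.card := by
    apply Finset.card_image_of_injOn
    intro p hp q hq h
    by_contra hne
    exact (hdisj p hp q hq hne).2.2.2 h
  have hSA : S ⊆ A := by
    intro v hv
    obtain ⟨p, hp, rfl⟩ := Finset.mem_image.1 hv
    obtain ⟨-, -, -, h2, c, -, hc⟩ := hM p hp
    exact Finset.mem_filter.2 ⟨h2, by simp [hc]⟩
  have hsub : U.image some ⊆ (A \ S).image f := by
    intro o ho
    obtain ⟨c, hc, rfl⟩ := Finset.mem_image.1 ho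
    obtain ⟨-, v, hv, hvc⟩ := Finset.mem_filter.1 hc
    by_cases hvS : v ∈ S
    · obtain ⟨p, hp, rfl⟩ := Finset.mem_image.1 hvS
      obtain ⟨hne, -, h1, h2, d, hd1, hd2⟩ := hM p hp
      refine Finset.mem_image.2 ⟨p.1, Finset.mem_sdiff.2
        ⟨Finset.mem_filter.2 ⟨h1, by simp [hd1]⟩, ?_⟩, by rw [hd1, ← hd2, hvc]⟩
      intro h
      obtain ⟨q, hq, hqp⟩ := Finset.mem_image.1 h
      by_cases hpq : p = q
      · subst hpq
        exact hne hqp.symm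
      · exact (hdisj p hp q hq hpq).2.1 hqp.symm
    · exact Finset.mem_image.2 ⟨v, Finset.mem_sdiff.2
        ⟨Finset.mem_filter.2 ⟨hv, by simp [hvc]⟩, hvS⟩, hvc⟩
  have h1 : U.card ≤ (A \ S).card := by
    rw [← Finset.card_image_of_injective U (Option.some_injective _)]
    exact (Finset.card_le_card hsub).trans Finset.card_image_le
  have h2 := Finset.card_sdiff_add_card_eq_card hSA
  have h3 : {c : Fin (Δ + 1) | ∀ v ∈ C, f v ≠ some c} = ((Uᶜ : Finset _) : Set (Fin (Δ + 1))) := by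
    ext c
    simp [hU]
  have h4 := Finset.card_add_card_compl U
  rw [Fintype.card_fin] at h4
  rw [h3, Set.ncard_coe_finset]
  omega
end

section
/- Let G be a graph of maximum degree at most Δ with a partial (Δ+1)-coloring, let C be a set of vertices of G, and let M be a colorful matching in C. If a vertex v ∈ C is promising, i.e. its anti-degree satisfies a_v ≤ |M|, then |Ψ_C ∩ Ψ_v| ≥ |Ĉ|, where Ĉ is the set of uncolored vertices of C. -/
/-- Let `G` have maximum degree at most `Δ`, with a partial
`(Δ+1)`-coloring `f`, let `C` be a vertex set and `M` a colorful matching in `C`.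
If `v ∈ C` is promising, i.e. its anti-degree `a_v = |C \ N(v)|` satisfies
`a_v ≤ |M|`, then `|Ψ_C ∩ Ψ_v| ≥ |Ĉ|`, where `Ĉ` is the set of uncolored
vertices of `C`. -/
theorem stmt2 {V : Type*} [Fintype V] [DecidableEq V] (G : SimpleGraph V)
    [DecidableRel G.Adj] (Δ : ℕ) (hdeg : ∀ v, G.degree v ≤ Δ)
    (f : V → Option (Fin (Δ + 1)))
    (hf : ∀ u v, G.Adj u v → ∀ c, f u = some c → f v ≠ some c)
    (C : Finset V) (M : Finset (V × V))
    (hM : ∀ p ∈ M, p.1 ≠ p.2 ∧ ¬ G.Adj p.1 p.2 ∧ p.1 ∈ C ∧ p.2 ∈ C ∧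
      ∃ c, f p.1 = some c ∧ f p.2 = some c)
    (hdisj : ∀ p ∈ M, ∀ q ∈ M, p ≠ q →
      p.1 ≠ q.1 ∧ p.1 ≠ q.2 ∧ p.2 ≠ q.1 ∧ p.2 ≠ q.2)
    (hcol : ∀ p ∈ M, ∀ q ∈ M, p ≠ q → f p.1 ≠ f q.1)
    (v : V) (hv : v ∈ C)
    (hpromising : (C.filter (fun u => ¬ G.Adj v u)).card ≤ M.card) :
    (C.filter (fun u => f u = none)).card ≤
      Set.ncard {c : Fin (Δ + 1) |
        (∀ u ∈ C, f u ≠ some c) ∧ (∀ u, G.Adj v u → f u ≠ some c)} := by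
  classical
  set H := C.filter (fun u => f u = none) with hH
  set F := M.image Prod.fst with hF
  set W := C.filter (fun u => ¬ G.Adj v u) ∪ G.neighborFinset v with hW
  have hCW : ∀ u ∈ C, u ∈ W := by
    intro u hu
    by_cases h : G.Adj v u <;> simp [hW, hu, h]
  have hFcard : F.card = M.card := by
    apply Finset.card_image_of_injOn
    intro p hp q hq h
    by_contra hne
    exact (hdisj p hp q hq hne).1 h
  have hHF : Disjoint H F := by
    rw [Finset.disjoint_left]
    intro u hu hu2
    obtain ⟨p, hp, rfl⟩ := Finset.mem_image.1 hu2
    obtain ⟨_, _, _, _, c, h1, _⟩ := hM p hp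
    simp [hH, h1] at hu
  have hsub : H ∪ F ⊆ W := by
    intro u hu
    rcases Finset.mem_union.1 hu with h | h
    · exact hCW u (Finset.mem_filter.1 h).1
    · obtain ⟨p, hp, rfl⟩ := Finset.mem_image.1 h
      exact hCW _ (hM p hp).2.2.1
  have hWcard : W.card ≤ M.card + Δ := by
    refine (Finset.card_union_le _ _).trans ?_
    rw [SimpleGraph.card_neighborFinset_eq_degree]
    exact Nat.add_le_add hpromising (hdeg v)
  set P : Finset (Fin (Δ + 1)) := Finset.univ.filter (fun c =>
    (∀ u ∈ C, f u ≠ some c) ∧ (∀ u, G.Adj v u → f u ≠ some c)) with hP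
  have hset : {c : Fin (Δ + 1) |
        (∀ u ∈ C, f u ≠ some c) ∧ (∀ u, G.Adj v u → f u ≠ some c)} = (P : Set _) := by
    ext c; simp [hP]
  rw [hset, Set.ncard_coe_finset]
  have key : (Pᶜ).image some ⊆ (W \ (H ∪ F)).image f := by
    intro o ho
    obtain ⟨c, hc, rfl⟩ := Finset.mem_image.1 ho
    have hex : ∃ u ∈ W, f u = some c := by
      by_contra hcon
      push Not at hcon
      apply Finset.mem_compl.1 hc
      refine Finset.mem_filter.2 ⟨Finset.mem_univ _, fun u hu => hcon u (hCW u hu), ?_⟩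
      intro u hu
      exact hcon u (by simp [hW, hu])
    obtain ⟨u, hu, huc⟩ := hex
    have aux : ∀ w, f w = some c → w ∉ H := by
      intro w hw h
      simp [hH, hw] at h
    by_cases huF : u ∈ F
    · obtain ⟨p, hp, rfl⟩ := Finset.mem_image.1 huF
      obtain ⟨hne, _, _, h2, d, hd1, hd2⟩ := hM p hp
      have hpc : f p.2 = some c := by rw [hd2, ← hd1, huc]
      refine Finset.mem_image.2 ⟨p.2, Finset.mem_sdiff.2 ⟨hCW _ h2, ?_⟩, hpc⟩
      intro h
      rcases Finset.mem_union.1 h with h | h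
      · exact aux _ hpc h
      · obtain ⟨q, hq, hqp⟩ := Finset.mem_image.1 h
        by_cases hpq : p = q
        · subst hpq; exact hne hqp
        · exact (hdisj p hp q hq hpq).2.2.1 hqp.symm
    · refine Finset.mem_image.2 ⟨u, Finset.mem_sdiff.2 ⟨hu, ?_⟩, huc⟩
      intro h
      rcases Finset.mem_union.1 h with h | h
      · exact aux _ huc h
      · exact huF h
  have h1 := (Finset.card_le_card key).trans Finset.card_image_le
  rw [Finset.card_image_of_injective _ (Option.some_injective _),
    Finset.card_sdiff_of_subset hsub, Finset.card_union_of_disjoint hHF, hFcard,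
    Finset.card_compl, Fintype.card_fin] at h1
  have h2 := Finset.card_le_card hsub
  rw [Finset.card_union_of_disjoint hHF, hFcard] at h2
  omega
end

section
/- Let Δ ≥ 1 be an integer, 0 < ε ≤ 1/15, η > 0 and L_max ≥ 0 reals with L_max/η ≤ ε. Let G be a graph with a partial (Δ+1)-coloring and let C be a set of vertices with |C| ≥ (1−ε)Δ such that every v ∈ C is uncolored, has at most εΔ colored neighbors outside C, and has at most Δ/η uncolored neighbors outside C. Assign to every uncolored vertex w ∉ C a list L(w) ⊆ {1,…,Δ+1} with |L(w)| ≤ L_max. For an anti-edge e = {u,v} (u,v ∈ C distinct and non-adjacent in G), let avail(e) be the number of colors c ∈ {1,…,Δ+1} such that c is not the color of any colored neighbor outside C of u or v, and c does not belong to the list L(w) of any uncolored neighbor w outside C of u or v. Let F be the set of all anti-edges of C and let d̄_C = 2|F|/|C|. Then Σ_{e∈F} avail(e) ≥ d̄_C · Δ²/3. -/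
/-- Let `Δ ≥ 1`, `0 < ε ≤ 1/15`, `η > 0`, `L_max ≥ 0` with
`L_max/η ≤ ε`. Let `G` carry a partial `(Δ+1)`-coloring `f`, and let `C` be a
vertex set with `|C| ≥ (1-ε)Δ` all of whose vertices are uncolored, each having
at most `εΔ` colored neighbors outside `C` and at most `Δ/η` uncolored
neighbors outside `C`. Each uncolored vertex `w ∉ C` has a list `L w` of at most
`L_max` colors. For an anti-edge `e = {u,v}` of `C`, `avail e` counts the colors
that are neither the color of a colored neighbor outside `C` of `u` or `v`, nor
in the list of an uncolored neighbor outside `C` of `u` or `v`. Then, with `F`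
the set of all anti-edges of `C` and `d̄_C = 2|F|/|C|`,
`Σ_{e∈F} avail e ≥ d̄_C · Δ²/3`. -/
theorem stmt5 {V : Type*} [Fintype V] [DecidableEq V] (G : SimpleGraph V)
    [DecidableRel G.Adj] (Δ : ℕ) (hΔ : 1 ≤ Δ) (ε η Lmax : ℝ)
    (hε0 : 0 < ε) (hε1 : ε ≤ 1 / 15) (hη : 0 < η) (hL0 : 0 ≤ Lmax)
    (hLη : Lmax / η ≤ ε)
    (f : V → Option (Fin (Δ + 1)))
    (hf : ∀ u v, G.Adj u v → ∀ c, f u = some c → f v ≠ some c)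
    (C : Finset V)
    (hCcard : (1 - ε) * Δ ≤ (C.card : ℝ))
    (hCuncol : ∀ v ∈ C, f v = none)
    (hext1 : ∀ v ∈ C,
      (((Finset.univ.filter (fun w => G.Adj v w ∧ w ∉ C ∧ f w ≠ none)).card : ℝ)) ≤ ε * Δ)
    (hext2 : ∀ v ∈ C,
      (((Finset.univ.filter (fun w => G.Adj v w ∧ w ∉ C ∧ f w = none)).card : ℝ)) ≤ (Δ : ℝ) / η)
    (L : V → Finset (Fin (Δ + 1)))
    (hL : ∀ w, w ∉ C → f w = none → ((L w).card : ℝ) ≤ Lmax)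
    (avail : Sym2 V → ℕ)
    (havail : ∀ u v : V, avail s(u, v) =
      Set.ncard {c : Fin (Δ + 1) | ∀ w, w ∉ C → (G.Adj u w ∨ G.Adj v w) →
        f w ≠ some c ∧ (f w = none → c ∉ L w)})
    (F : Finset (Sym2 V))
    (hF : ∀ e : Sym2 V, e ∈ F ↔ (¬ e.IsDiag ∧ e ∉ G.edgeSet ∧ ∀ u ∈ e, u ∈ C)) :
    (2 * (F.card : ℝ) / (C.card : ℝ)) * (Δ : ℝ) ^ 2 / 3 ≤ ∑ e ∈ F, (avail e : ℝ) := by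
  classical
  have hD : (1:ℝ) ≤ Δ := by exact_mod_cast hΔ
  have hCpos : (0:ℝ) < C.card := by nlinarith
  let N1 : V → Finset V := fun v => Finset.univ.filter (fun w => G.Adj v w ∧ w ∉ C ∧ f w ≠ none)
  let N2 : V → Finset V := fun v => Finset.univ.filter (fun w => G.Adj v w ∧ w ∉ C ∧ f w = none)
  let B : V → Finset (Fin (Δ + 1)) := fun v =>
    (N1 v).biUnion (fun w => (f w).toFinset) ∪ (N2 v).biUnion L
  have hB : ∀ v ∈ C, ((B v).card : ℝ) ≤ 2 * ε * Δ := by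
    intro v hv
    have h1 : ((N1 v).biUnion (fun w => (f w).toFinset)).card ≤ (N1 v).card * 1 := by
      apply Finset.card_biUnion_le_card_mul
      intro w _
      cases f w <;> simp
    have h2 : (((N2 v).biUnion L).card : ℝ) ≤ (N2 v).card * Lmax := by
      have h3 : (((N2 v).biUnion L).card : ℝ) ≤ ∑ w ∈ N2 v, ((L w).card : ℝ) := by
        exact_mod_cast Finset.card_biUnion_le
      refine h3.trans ?_
      rw [← nsmul_eq_mul]
      apply Finset.sum_le_card_nsmul
      intro w hw
      have hw' := (Finset.mem_filter.mp hw).2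
      exact hL w hw'.2.1 hw'.2.2
    have h4 : ((B v).card : ℝ) ≤ ((N1 v).biUnion (fun w => (f w).toFinset)).card
        + ((N2 v).biUnion L).card := by
      exact_mod_cast Finset.card_union_le _ _
    have h5 : (((N1 v).biUnion (fun w => (f w).toFinset)).card : ℝ) ≤ (N1 v).card := by
      rw [mul_one] at h1
      exact_mod_cast h1
    have h6 : ((N1 v).card : ℝ) ≤ ε * Δ := hext1 v hv
    have h7 : ((N2 v).card : ℝ) ≤ Δ / η := hext2 v hv
    have h8 : ((N2 v).card : ℝ) * Lmax ≤ ε * Δ := by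
      calc ((N2 v).card : ℝ) * Lmax ≤ Δ / η * Lmax := by gcongr
        _ = Lmax / η * Δ := by ring
        _ ≤ ε * Δ := by gcongr
    linarith
  have key : ∀ e ∈ F, 2 * (Δ:ℝ) ^ 2 / (3 * C.card) ≤ (avail e : ℝ) := by
    intro e he
    have he' := ((hF e).mp he).2.2
    clear he
    induction e using Sym2.ind with
    | _ u v =>
    have hu := hB u (he' u (by simp))
    have hv := hB v (he' v (by simp))
    have hsub : ((B u ∪ B v)ᶜ).card ≤ avail s(u, v) := by
      rw [havail, ← Set.ncard_coe_finset]
      apply Set.ncard_le_ncard _ (Set.toFinite _)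
      intro c hc
      simp only [Finset.coe_compl, Set.mem_compl_iff, Finset.mem_coe, B, N1, N2, Finset.mem_union,
        Finset.mem_biUnion, Finset.mem_filter, Finset.mem_univ, true_and,
        Option.mem_toFinset, Option.mem_def] at hc
      intro w hw hadj
      constructor
      · intro hfw
        have : f w ≠ none := by simp [hfw]
        grind
      · intro hfw hcl
        grind
    have hcard : (B u ∪ B v).card + ((B u ∪ B v)ᶜ).card = Δ + 1 := by
      rw [Finset.card_add_card_compl, Fintype.card_fin]
    have hun := Finset.card_union_le (B u) (B v)
    have hnat : Δ + 1 ≤ (B u).card + (B v).card + avail s(u, v) := by omega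
    have hreal : (Δ:ℝ) + 1 ≤ (B u).card + (B v).card + avail s(u, v) := by exact_mod_cast hnat
    have ha : 11 / 15 * (Δ:ℝ) ≤ avail s(u, v) := by nlinarith
    have hc : 14 / 15 * (Δ:ℝ) ≤ C.card := by nlinarith
    rw [div_le_iff₀ (by positivity)]
    have := mul_le_mul ha hc (by positivity) (by positivity)
    nlinarith
  have hs := Finset.card_nsmul_le_sum F (fun e => (avail e : ℝ)) _ key
  refine le_trans (le_of_eq ?_) hs
  rw [nsmul_eq_mul]
  field_simp
end

section
/- Let G be a finite simple graph on vertex set C with n = |C| ≥ 2, and let c > 0 be a real number. Suppose that for every nonempty subset S ⊆ C with |S| ≤ 3n/4 we have |N(S) ∖ S| ≥ c·|S|, where N(S) is the set of vertices adjacent to at least one vertex of S. Then G is connected, and any two vertices of G are at graph distance at most 2·(⌈log n / log(1+c)⌉ + 1). -/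
open scoped Classical

noncomputable def bll {V : Type*} [Fintype V] (G : SimpleGraph V) (u : V) : ℕ → Finset V
  | 0 => {u}
  | k + 1 => bll G u k ∪ (Finset.univ.filter (fun v => ∃ w ∈ bll G u k, G.Adj w v) \ bll G u k)

lemma bll_walk {V : Type*} [Fintype V] (G : SimpleGraph V) (u : V) (k : ℕ) :
    ∀ v ∈ bll G u k, ∃ p : G.Walk u v, p.length ≤ k := by
  induction k with
  | zero =>
    intro v hv
    simp only [bll, Finset.mem_singleton] at hv
    subst hv
    exact ⟨.nil, by simp⟩
  | succ k ih =>
    intro v hv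
    simp only [bll, Finset.mem_union, Finset.mem_sdiff, Finset.mem_filter, Finset.mem_univ,
      true_and] at hv
    rcases hv with hv | ⟨⟨w, hw, ha⟩, _⟩
    · obtain ⟨p, hp⟩ := ih v hv
      exact ⟨p, by omega⟩
    · obtain ⟨p, hp⟩ := ih w hw
      exact ⟨p.concat ha, by rw [SimpleGraph.Walk.length_concat]; omega⟩

lemma bll_nonempty {V : Type*} [Fintype V] (G : SimpleGraph V) (u : V) (k : ℕ) :
    (bll G u k).Nonempty := by
  induction k with
  | zero => exact ⟨u, by simp [bll]⟩
  | succ k ih => exact ih.mono (by rw [bll]; exact Finset.subset_union_left)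

lemma bll_card {V : Type*} [Fintype V] (G : SimpleGraph V) (c : ℝ) (hc : 0 < c)
    (hexp : ∀ S : Finset V, S.Nonempty → (S.card : ℝ) ≤ 3 * (Fintype.card V : ℝ) / 4 →
      c * (S.card : ℝ) ≤
        ((Finset.univ.filter (fun v => ∃ u ∈ S, G.Adj u v) \ S).card : ℝ)) (u : V) (k : ℕ) :
    (1 + c) ^ k ≤ ((bll G u k).card : ℝ) ∨
      3 * (Fintype.card V : ℝ) / 4 < ((bll G u k).card : ℝ) := by
  induction k with
  | zero => left; simp [bll]
  | succ k ih =>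
    have h1 : ((bll G u (k+1)).card : ℝ) = (bll G u k).card +
        ((Finset.univ.filter (fun v => ∃ w ∈ bll G u k, G.Adj w v) \ bll G u k).card : ℝ) := by
      rw [bll, Finset.card_union_of_disjoint Finset.disjoint_sdiff]
      push_cast; rfl
    by_cases hb : ((bll G u k).card : ℝ) ≤ 3 * (Fintype.card V : ℝ) / 4
    · left
      have h2 := hexp _ (bll_nonempty G u k) hb
      rcases ih with ih | ih
      · rw [pow_succ, h1]
        nlinarith
      · linarith
    · right
      rw [h1]
      have : (0:ℝ) ≤ ((Finset.univ.filter
        (fun v => ∃ w ∈ bll G u k, G.Adj w v) \ bll G u k).card : ℝ) := Nat.cast_nonneg _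
      linarith

/-- Let `G` be a finite simple graph on `n ≥ 2` vertices and
`c > 0` such that every nonempty `S` with `|S| ≤ 3n/4` satisfies
`|N(S) \ S| ≥ c|S|`. Then `G` is connected and any two vertices are at graph
distance at most `2·(⌈log n / log(1+c)⌉ + 1)`. -/
theorem stmt6 {V : Type*} [Fintype V] (G : SimpleGraph V) (c : ℝ) (hc : 0 < c)
    (hn : 2 ≤ Fintype.card V)
    (hexp : ∀ S : Finset V, S.Nonempty → (S.card : ℝ) ≤ 3 * (Fintype.card V : ℝ) / 4 →
      c * (S.card : ℝ) ≤
        ((Finset.univ.filter (fun v => ∃ u ∈ S, G.Adj u v) \ S).card : ℝ)) :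
    G.Connected ∧ ∀ u v : V,
      (G.dist u v : ℝ) ≤
        2 * ((⌈Real.log (Fintype.card V) / Real.log (1 + c)⌉ : ℝ) + 1) := by
  have hn' : (2 : ℝ) ≤ Fintype.card V := by exact_mod_cast hn
  have hlc : 0 < Real.log (1 + c) := Real.log_pos (by linarith)
  have hln : 0 ≤ Real.log (Fintype.card V) := Real.log_nonneg (by linarith)
  have h0 : 0 ≤ Real.log (Fintype.card V) / Real.log (1 + c) := div_nonneg hln hlc.le
  obtain ⟨k, hk⟩ := Int.eq_ofNat_of_zero_le (Int.ceil_nonneg h0)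
  have hk1 : Real.log (Fintype.card V) / Real.log (1 + c) ≤ k := by
    have := Int.le_ceil (Real.log (Fintype.card V) / Real.log (1 + c))
    rw [hk] at this
    exact_mod_cast this
  have hk2 : (Fintype.card V : ℝ) ≤ (1 + c) ^ k := by
    rw [div_le_iff₀ hlc, ← Real.log_pow] at hk1
    exact (Real.log_le_log_iff (by linarith) (by positivity)).1 hk1
  have big : ∀ u, 3 * (Fintype.card V : ℝ) / 4 < ((bll G u k).card : ℝ) := by
    intro u
    rcases bll_card G c hc hexp u k with h | h
    · linarith
    · exact h
  have key : ∀ u v, ∃ p : G.Walk u v, p.length ≤ 2 * k := by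
    intro u v
    have : ¬ Disjoint (bll G u k) (bll G v k) := by
      intro hd
      have h1 := Finset.card_union_of_disjoint hd
      have h2 := Finset.card_le_univ (bll G u k ∪ bll G v k)
      rw [h1] at h2
      have h3 : ((bll G u k).card : ℝ) + (bll G v k).card ≤ Fintype.card V := by exact_mod_cast h2
      have := big u
      have := big v
      linarith
    obtain ⟨w, hw1, hw2⟩ := Finset.not_disjoint_iff.1 this
    obtain ⟨p, hp⟩ := bll_walk G u k w hw1
    obtain ⟨q, hq⟩ := bll_walk G v k w hw2
    exact ⟨p.append q.reverse, by simp; omega⟩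
  refine ⟨?_, ?_⟩
  · have : Nonempty V := Fintype.card_pos_iff.1 (by omega)
    exact ⟨fun u v => (key u v).elim fun p _ => ⟨p⟩⟩
  · intro u v
    obtain ⟨p, hp⟩ := key u v
    have h : (G.dist u v : ℝ) ≤ 2 * k := by exact_mod_cast (SimpleGraph.dist_le p).trans hp
    rw [hk]
    push_cast
    linarith
end

section
/- Let n ≥ 1 be an integer, let α be a type equipped with a probability distribution μ, let I be a finite nonempty index set, and for each i ∈ I let bad_i ⊆ α be an event with μ(bad_i) ≤ 1/n. Then for every integer t with t > 3·n·ln|I|, there exist seeds s₁, …, s_t ∈ α such that for every i ∈ I, the number of indices j ∈ {1,…,t} with s_j ∈ bad_i is at most 2t/n. -/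
open MeasureTheory
open scoped Classical

theorem aux_step {α : Type*} [MeasurableSpace α] (μ : Measure α)
    [IsProbabilityMeasure μ] (n : ℕ)
    {I : Type*} [Fintype I] (bad : I → Set α)
    (hmeas : ∀ i, MeasurableSet (bad i))
    (hbad : ∀ i, μ.real (bad i) ≤ 1 / (n : ℝ)) (w : I → ℝ) (hw : ∀ i, 0 ≤ w i) :
    ∃ a : α, ∑ i, w i * (if a ∈ bad i then (2:ℝ) else 1) ≤ (1 + 1 / (n:ℝ)) * ∑ i, w i := by
  have e : ∀ i, (fun a => w i * (if a ∈ bad i then (2:ℝ) else 1))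
      = fun a => w i * (1 + (bad i).indicator (fun _ => (1:ℝ)) a) := by
    intro i
    funext a
    by_cases h : a ∈ bad i
    · simp [h]; left; norm_num
    · simp [h]
  have hind : ∀ i, Integrable ((bad i).indicator (fun _ => (1:ℝ))) μ := fun i =>
    (integrable_const (1:ℝ)).indicator (hmeas i)
  have hint : ∀ i, Integrable (fun a => w i * (if a ∈ bad i then (2:ℝ) else 1)) μ := by
    intro i
    rw [e i]
    exact ((integrable_const (1:ℝ)).add (hind i)).const_mul _
  obtain ⟨a, ha⟩ := exists_le_integral
    (integrable_finset_sum Finset.univ (fun i _ => hint i))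
  refine ⟨a, ha.trans ?_⟩
  rw [integral_finset_sum _ (fun i _ => hint i), Finset.mul_sum]
  refine Finset.sum_le_sum fun i _ => ?_
  rw [e i, integral_const_mul, integral_add (integrable_const _) (hind i),
    integral_indicator_const _ (hmeas i), mul_comm]
  refine mul_le_mul_of_nonneg_right ?_ (hw i)
  simpa using hbad i

theorem aux_iter {α : Type*} [MeasurableSpace α] (μ : Measure α)
    [IsProbabilityMeasure μ] (n : ℕ)
    {I : Type*} [Fintype I] (bad : I → Set α)
    (hmeas : ∀ i, MeasurableSet (bad i))
    (hbad : ∀ i, μ.real (bad i) ≤ 1 / (n : ℝ)) (t : ℕ) :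
    ∀ (w : I → ℝ), (∀ i, 0 ≤ w i) →
    ∃ s : Fin t → α, ∑ i, w i * ∏ j, (if s j ∈ bad i then (2:ℝ) else 1)
      ≤ (1 + 1 / (n:ℝ)) ^ t * ∑ i, w i := by
  induction t with
  | zero => intro w _; exact ⟨Fin.elim0, by simp⟩
  | succ t ih =>
    intro w hw
    obtain ⟨a, ha⟩ := aux_step μ n bad hmeas hbad w hw
    obtain ⟨s, hs⟩ := ih (fun i => w i * (if a ∈ bad i then (2:ℝ) else 1))
      (fun i => mul_nonneg (hw i) (by split_ifs <;> norm_num))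
    refine ⟨Fin.cons a s, ?_⟩
    simp only [Fin.prod_univ_succ, Fin.cons_zero, Fin.cons_succ, ← mul_assoc]
    refine hs.trans ?_
    rw [pow_succ, mul_assoc]
    exact mul_le_mul_of_nonneg_left ha (by positivity)

/-- Let `n ≥ 1`, `μ` a probability measure on a type `α`, `I` a
finite nonempty index set, and `bad i` measurable events with `μ (bad i) ≤ 1/n`.
Then for every integer `t > 3·n·ln|I|` there exist seeds `s₁, …, s_t ∈ α` such
that for every `i ∈ I`, at most `2t/n` of the seeds lie in `bad i`. -/
theorem stmt8 {α : Type*} [MeasurableSpace α] (μ : Measure α)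
    [IsProbabilityMeasure μ] (n : ℕ) (hn : 1 ≤ n)
    {I : Type*} [Fintype I] [Nonempty I] (bad : I → Set α)
    (hmeas : ∀ i, MeasurableSet (bad i))
    (hbad : ∀ i, μ (bad i) ≤ 1 / (n : ENNReal))
    (t : ℕ) (ht : 3 * (n : ℝ) * Real.log (Fintype.card I) < (t : ℝ)) :
    ∃ s : Fin t → α, ∀ i : I,
      (((Finset.univ.filter (fun j : Fin t => s j ∈ bad i)).card : ℝ)) ≤
        2 * (t : ℝ) / (n : ℝ) := by
  have hn0 : (0:ℝ) < n := by exact_mod_cast hn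
  have hb : ∀ i, μ.real (bad i) ≤ 1 / (n : ℝ) := by
    intro i
    have := ENNReal.toReal_mono (by simp; omega) (hbad i)
    simpa [Measure.real] using this
  obtain ⟨s, hs⟩ := aux_iter μ n bad hmeas hb t (fun _ => 1) (fun _ => zero_le_one)
  refine ⟨s, fun i => ?_⟩
  simp only [one_mul, Finset.prod_ite, Finset.prod_const, one_pow, mul_one,
    Finset.sum_const, Finset.card_univ, nsmul_eq_mul] at hs
  set X := (Finset.univ.filter (fun j : Fin t => s j ∈ bad i)).card with hX
  have h1 : (2:ℝ) ^ X ≤ (1 + 1 / (n:ℝ)) ^ t * (Fintype.card I) := by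
    refine le_trans ?_ hs
    exact Finset.single_le_sum
      (f := fun i => (2:ℝ) ^ (Finset.univ.filter (fun j : Fin t => s j ∈ bad i)).card)
      (fun _ _ => by positivity) (Finset.mem_univ i)
  have hc : (0:ℝ) < Fintype.card I := by exact_mod_cast Fintype.card_pos
  have hp : (0:ℝ) < 1 + 1 / (n:ℝ) := by positivity
  have h2 := Real.log_le_log (by positivity) h1
  rw [Real.log_mul (by positivity) hc.ne', Real.log_pow, Real.log_pow] at h2
  have h3 : Real.log (1 + 1 / (n:ℝ)) ≤ 1 / n := by
    have := Real.log_le_sub_one_of_pos hp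
    linarith
  have h4 : (t:ℝ) * Real.log (1 + 1 / (n:ℝ)) ≤ t / n := by
    calc _ ≤ (t:ℝ) * (1 / n) := mul_le_mul_of_nonneg_left h3 (by positivity)
      _ = _ := by ring
  have h5 : Real.log (Fintype.card I) ≤ (t / n : ℝ) / 3 := by
    rw [div_div, le_div_iff₀ (by positivity)]
    linarith
  have h6 : (0:ℝ) ≤ t / n := by positivity
  have h7 : (X:ℝ) * (2/3) ≤ X * Real.log 2 :=
    mul_le_mul_of_nonneg_left (by linarith [Real.log_two_gt_d9]) (by positivity)
  rw [mul_div_assoc]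
  linarith
end
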